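/- arXiv:1201.5334 — 6 statements merged into one kernel-verified Lean document; each statement's English description precedes it below -/
import Mathlib

section
/- Robertson's uncertainty relation for mixed states: for any Hermitian n×n complex matrices A and B and any density matrix ρ, σ(A;ρ)·σ(B;ρ) ≥ (1/2)·|Tr[(AB − BA)ρ]|. -/
open ComplexOrder

/-- The standard deviation of a Hermitian matrix `A` in the state `ρ`:
`σ(A;ρ)² = Tr[A²ρ] − (Tr[Aρ])²`. -/
noncomputable def stddev {n : ℕ} (A ρ : Matrix (Fin n) (Fin n) ℂ) : ℝ :=
  Real.sqrt ((A * A * ρ).trace.re - ((A * ρ).trace.re) ^ 2)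

lemma rob_quad {n : ℕ} (X Y ρ : Matrix (Fin n) (Fin n) ℂ)
    (hX : X.IsHermitian) (hY : Y.IsHermitian) (hρ : ρ.PosSemidef) (t : ℝ) :
    0 ≤ (Y * Y * ρ).trace.re * (t * t) + (-((X * Y - Y * X) * ρ).trace.im) * t
      + (X * X * ρ).trace.re := by
  have h := (hρ.mul_mul_conjTranspose_same (X + (Complex.I * (t : ℂ)) • Y)).trace_nonneg
  rw [Matrix.trace_mul_comm, ← Matrix.mul_assoc] at h
  have h2 := (Complex.le_def.1 h).1
  have e : (X + (Complex.I * (t : ℂ)) • Y).conjTranspose = X - (Complex.I * (t : ℂ)) • Y := by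
    rw [Matrix.conjTranspose_add, Matrix.conjTranspose_smul, hX.eq, hY.eq]
    simp [sub_eq_add_neg]
  rw [e] at h2
  have e2 : (X - (Complex.I * (t : ℂ)) • Y) * (X + (Complex.I * (t : ℂ)) • Y) * ρ
      = X * X * ρ + (Complex.I * (t : ℂ)) • ((X * Y - Y * X) * ρ)
        - (Complex.I * (t : ℂ) * (Complex.I * (t : ℂ))) • (Y * Y * ρ) := by
    simp only [Matrix.sub_mul, Matrix.mul_add, Matrix.add_mul, Matrix.smul_mul, Matrix.mul_smul,
      smul_sub, smul_smul]
    abel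
  rw [e2] at h2
  simp only [Matrix.trace_sub, Matrix.trace_add, Matrix.trace_smul, smul_eq_mul,
    Complex.sub_re, Complex.add_re, Complex.mul_re, Complex.mul_im, Complex.I_re, Complex.I_im,
    Complex.ofReal_re, Complex.ofReal_im, Complex.zero_re] at h2
  simp only [Matrix.sub_mul, Matrix.trace_sub, Complex.sub_im] at h2 ⊢
  linarith

lemma rob_var {n : ℕ} (A ρ : Matrix (Fin n) (Fin n) ℂ) (hρtr : ρ.trace = 1) :
    ((A - (((A * ρ).trace.re : ℝ) : ℂ) • 1) * (A - (((A * ρ).trace.re : ℝ) : ℂ) • 1) * ρ).trace.re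
      = (A * A * ρ).trace.re - ((A * ρ).trace.re) ^ 2 := by
  simp only [Matrix.sub_mul, Matrix.mul_sub, Matrix.smul_mul, Matrix.mul_smul, Matrix.one_mul,
    Matrix.mul_one, Matrix.trace_sub, Matrix.trace_smul, smul_eq_mul, hρtr, Complex.sub_re,
    Complex.mul_re, Complex.mul_im, Complex.ofReal_re, Complex.ofReal_im, Complex.one_re,
    Complex.one_im, Complex.sub_im]
  ring

lemma rob_herm {n : ℕ} (A : Matrix (Fin n) (Fin n) ℂ) (hA : A.IsHermitian) (a : ℝ) :
    (A - (a : ℂ) • 1).IsHermitian := by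
  unfold Matrix.IsHermitian
  rw [Matrix.conjTranspose_sub, Matrix.conjTranspose_smul, hA.eq]
  simp

lemma rob_re {n : ℕ} (A B ρ : Matrix (Fin n) (Fin n) ℂ)
    (hA : A.IsHermitian) (hB : B.IsHermitian) (hρ : ρ.PosSemidef) :
    ((A * B - B * A) * ρ).trace.re = 0 := by
  have h := Matrix.trace_conjTranspose ((A * B - B * A) * ρ)
  rw [Matrix.conjTranspose_mul, Matrix.conjTranspose_sub, Matrix.conjTranspose_mul,
    Matrix.conjTranspose_mul, hA.eq, hB.eq, hρ.1.eq, Matrix.trace_mul_comm,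
    ← neg_sub (A * B), Matrix.neg_mul, Matrix.trace_neg] at h
  have h2 := congrArg Complex.re h
  simp only [Complex.neg_re, Complex.star_def, Complex.conj_re] at h2
  linarith

/-- Robertson's uncertainty relation for mixed states. -/
theorem robertson_uncertainty_mixed {n : ℕ} (hn : 0 < n)
    (A B ρ : Matrix (Fin n) (Fin n) ℂ)
    (hA : A.IsHermitian) (hB : B.IsHermitian)
    (hρ : ρ.PosSemidef) (hρtr : ρ.trace = 1) :
    stddev A ρ * stddev B ρ ≥ (1 / 2) * ‖((A * B - B * A) * ρ).trace‖ := by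
  set a := (A * ρ).trace.re with ha
  set b := (B * ρ).trace.re with hb
  have hc : (A - (a : ℂ) • 1) * (B - (b : ℂ) • 1) - (B - (b : ℂ) • 1) * (A - (a : ℂ) • 1)
      = A * B - B * A := by
    simp only [Matrix.sub_mul, Matrix.mul_sub, Matrix.smul_mul, Matrix.mul_smul, Matrix.one_mul,
      Matrix.mul_one, smul_smul, smul_sub, mul_comm (b : ℂ) (a : ℂ)]
    abel
  have hq := rob_quad _ _ ρ (rob_herm A hA a) (rob_herm B hB b) hρ
  rw [hc, ha, hb, rob_var A ρ hρtr, rob_var B ρ hρtr] at hq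
  have hd := discrim_le_zero hq
  have hVA := hq 0
  have hVB := rob_quad _ _ ρ (rob_herm B hB b) (rob_herm A hA a) hρ 0
  rw [hb, rob_var B ρ hρtr] at hVB
  unfold discrim at hd
  unfold stddev
  have hn : ‖((A * B - B * A) * ρ).trace‖ = |((A * B - B * A) * ρ).trace.im| :=
    (Complex.abs_im_eq_norm.2 (rob_re A B ρ hA hB hρ)).symm
  rw [hn, ← Real.sqrt_mul (by linarith)]
  apply Real.le_sqrt_of_sq_le
  rw [mul_pow, sq_abs]
  linarith
end

section
/- Universal uncertainty principle (Ozawa's inequality, mixed-state matrix form): let A, B, N, D be Hermitian n×n complex matrices such that (A + N)(B + D) = (B + D)(A + N), and let ρ be a density matrix. Setting ε = (Tr[N²ρ])^{1/2} and η = (Tr[D²ρ])^{1/2}, one has ε·η + ε·σ(B;ρ) + σ(A;ρ)·η ≥ (1/2)·|Tr[(AB − BA)ρ]|. -/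
open ComplexOrder

theorem oz_nonneg {n : ℕ} (M ρ : Matrix (Fin n) (Fin n) ℂ) (hρ : ρ.PosSemidef) :
    0 ≤ (M.conjTranspose * M * ρ).trace.re := by
  have h := (hρ.mul_mul_conjTranspose_same M).trace_nonneg
  rw [Matrix.trace_mul_comm, ← Matrix.mul_assoc] at h
  exact (Complex.le_def.1 h).1

theorem oz_rob {n : ℕ} (X Y ρ : Matrix (Fin n) (Fin n) ℂ) (hX : X.IsHermitian)
    (hY : Y.IsHermitian) (hρ : ρ.PosSemidef) :
    (1 / 2) * ‖((X * Y - Y * X) * ρ).trace‖ ≤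
      Real.sqrt ((X * X * ρ).trace.re) * Real.sqrt ((Y * Y * ρ).trace.re) := by
  set w := ((X * Y - Y * X) * ρ).trace with hw
  have hstar : star w = -w := by
    rw [hw, ← Matrix.trace_conjTranspose, Matrix.conjTranspose_mul, Matrix.conjTranspose_sub,
      Matrix.conjTranspose_mul, Matrix.conjTranspose_mul, hX.eq, hY.eq, hρ.isHermitian.eq,
      Matrix.trace_mul_comm, ← Matrix.trace_neg, ← Matrix.neg_mul, neg_sub]
  have hre : w.re = 0 := by
    have := congrArg Complex.re hstar
    simp at this
    linarith
  have hwn : ‖w‖ = |w.im| := by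
    have : w = (w.im : ℂ) * Complex.I := by
      apply Complex.ext <;> simp [hre]
    rw [this]; simp
  have ha : 0 ≤ (X * X * ρ).trace.re := by
    have := oz_nonneg X ρ hρ
    rwa [hX.eq] at this
  have hq : ∀ t : ℝ, 0 ≤ (Y * Y * ρ).trace.re * (t * t) + (-w.im) * t + (X * X * ρ).trace.re := by
    intro t
    have h := oz_nonneg (X + (Complex.I * t) • Y) ρ hρ
    have e : (X + (Complex.I * t) • Y).conjTranspose * (X + (Complex.I * t) • Y) * ρ
        = X * X * ρ + (Complex.I * t) • ((X * Y - Y * X) * ρ) + ((t * t : ℝ) : ℂ) • (Y * Y * ρ) := by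
      have e1 : (t : ℂ) * t = -((Complex.I * t) * (Complex.I * t)) := by
        linear_combination ((t : ℂ) * t) * Complex.I_mul_I
      have e2 : star (Complex.I * (t : ℂ)) = -(Complex.I * t) := by simp
      rw [Matrix.conjTranspose_add, Matrix.conjTranspose_smul, hX.eq, hY.eq, e2]
      push_cast
      rw [e1]
      generalize Complex.I * (t : ℂ) = c
      simp only [add_mul, mul_add, sub_mul, Matrix.smul_mul, Matrix.mul_smul, smul_sub, smul_smul,
        neg_smul, neg_mul, smul_neg, mul_neg]
      abel
    rw [e, Matrix.trace_add, Matrix.trace_add, Matrix.trace_smul, Matrix.trace_smul, ← hw] at h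
    simp at h
    linarith
  have hd := discrim_le_zero hq
  unfold discrim at hd
  rw [hwn, ← Real.sqrt_mul ha]
  apply Real.le_sqrt_of_sq_le
  rw [mul_pow, sq_abs]
  linarith

theorem oz_shift {n : ℕ} (A ρ : Matrix (Fin n) (Fin n) ℂ)
    (hρtr : ρ.trace = 1) :
    stddev A ρ = Real.sqrt ((((A - (((A * ρ).trace.re : ℝ) : ℂ) • 1) *
      (A - (((A * ρ).trace.re : ℝ) : ℂ) • 1)) * ρ).trace.re) := by
  unfold stddev
  congr 1
  generalize ha : (A * ρ).trace.re = a
  simp [sub_mul, mul_sub, hρtr, ha]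
  ring

theorem oz_herm {n : ℕ} (A : Matrix (Fin n) (Fin n) ℂ) (hA : A.IsHermitian) (a : ℝ) :
    (A - (a : ℂ) • (1 : Matrix (Fin n) (Fin n) ℂ)).IsHermitian := by
  unfold Matrix.IsHermitian
  rw [Matrix.conjTranspose_sub, Matrix.conjTranspose_smul, hA.eq]
  simp

/-- Universal uncertainty principle (Ozawa's inequality, mixed-state matrix form). -/
theorem ozawa_inequality_mixed {n : ℕ} (hn : 0 < n)
    (A B N D ρ : Matrix (Fin n) (Fin n) ℂ)
    (hA : A.IsHermitian) (hB : B.IsHermitian)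
    (hN : N.IsHermitian) (hD : D.IsHermitian)
    (hcomm : (A + N) * (B + D) = (B + D) * (A + N))
    (hρ : ρ.PosSemidef) (hρtr : ρ.trace = 1) :
    Real.sqrt ((N * N * ρ).trace.re) * Real.sqrt ((D * D * ρ).trace.re) +
        Real.sqrt ((N * N * ρ).trace.re) * stddev B ρ +
        stddev A ρ * Real.sqrt ((D * D * ρ).trace.re) ≥
      (1 / 2) * ‖((A * B - B * A) * ρ).trace‖ := by
  rw [oz_shift A ρ hρtr, oz_shift B ρ hρtr]
  generalize (A * ρ).trace.re = a
  generalize (B * ρ).trace.re = b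
  have h1 := oz_rob N D ρ hN hD hρ
  have h2 := oz_rob N _ ρ hN (oz_herm B hB b) hρ
  have h3 := oz_rob _ D ρ (oz_herm A hA a) hD hρ
  have e2 : N * (B - (b : ℂ) • 1) - (B - (b : ℂ) • 1) * N = N * B - B * N := by
    simp [sub_mul, mul_sub]
  have e3 : (A - (a : ℂ) • 1) * D - D * (A - (a : ℂ) • 1) = A * D - D * A := by
    simp [sub_mul, mul_sub]
  rw [e2] at h2
  rw [e3] at h3
  have e : A * B - B * A = -((N * D - D * N) + (N * B - B * N) + (A * D - D * A)) := by
    have h := sub_eq_zero.2 hcomm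
    rw [← sub_eq_zero, ← h]
    noncomm_ring
  have ht : ‖((A * B - B * A) * ρ).trace‖ ≤ ‖((N * D - D * N) * ρ).trace‖
      + ‖((N * B - B * N) * ρ).trace‖ + ‖((A * D - D * A) * ρ).trace‖ := by
    rw [e, Matrix.neg_mul, Matrix.trace_neg, norm_neg, Matrix.add_mul, Matrix.add_mul,
      Matrix.trace_add, Matrix.trace_add]
    exact norm_add₃_le
  linarith
end

section
/- Condition for the Heisenberg-type inequality: let A, B, N, D be Hermitian n×n complex matrices such that (A + N)(B + D) = (B + D)(A + N), and let ρ be a density matrix. Setting ε = (Tr[N²ρ])^{1/2} and η = (Tr[D²ρ])^{1/2}, one has ε·η + (1/2)·|Tr[(NB − BN)ρ] + Tr[(AD − DA)ρ]| ≥ (1/2)·|Tr[(AB − BA)ρ]|. -/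
open ComplexOrder

lemma aux_self {n : ℕ} (X : Matrix (Fin n) (Fin n) ℂ) :
    (X * X.conjTranspose).trace.re = ∑ p : Fin n × Fin n, ‖X p.1 p.2‖ ^ 2 := by
  rw [Fintype.sum_prod_type]
  simp only [Matrix.trace, Matrix.diag, Matrix.mul_apply, Matrix.conjTranspose_apply,
    Complex.re_sum]
  refine Finset.sum_congr rfl fun i _ => Finset.sum_congr rfl fun j _ => ?_
  rw [← Complex.normSq_eq_norm_sq, Complex.normSq_apply]
  simp

lemma aux_cs {n : ℕ} (X Y : Matrix (Fin n) (Fin n) ℂ) :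
    ‖(X * Y.conjTranspose).trace‖ ≤
      Real.sqrt ((X * X.conjTranspose).trace.re) *
        Real.sqrt ((Y * Y.conjTranspose).trace.re) := by
  rw [aux_self, aux_self]
  refine le_trans ?_ (Real.sum_mul_le_sqrt_mul_sqrt _ _ _)
  have h : (X * Y.conjTranspose).trace =
      ∑ p : Fin n × Fin n, X p.1 p.2 * star (Y p.1 p.2) := by
    rw [Fintype.sum_prod_type]
    simp [Matrix.trace, Matrix.diag, Matrix.mul_apply]
  rw [h]
  refine (norm_sum_le _ _).trans (le_of_eq ?_)
  simp

lemma aux_tr {n : ℕ} (C P Q : Matrix (Fin n) (Fin n) ℂ) (hQ : Q.IsHermitian) :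
    (P * Q * (C.conjTranspose * C)).trace = ((C * P) * (C * Q).conjTranspose).trace := by
  rw [Matrix.conjTranspose_mul, hQ.eq, ← Matrix.mul_assoc, Matrix.trace_mul_comm]
  simp only [Matrix.mul_assoc]

/-- Condition for the Heisenberg-type inequality. -/
theorem heisenberg_type_condition {n : ℕ} (hn : 0 < n)
    (A B N D ρ : Matrix (Fin n) (Fin n) ℂ)
    (hA : A.IsHermitian) (hB : B.IsHermitian)
    (hN : N.IsHermitian) (hD : D.IsHermitian)
    (hcomm : (A + N) * (B + D) = (B + D) * (A + N))
    (hρ : ρ.PosSemidef) (hρtr : ρ.trace = 1) :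
    Real.sqrt ((N * N * ρ).trace.re) * Real.sqrt ((D * D * ρ).trace.re) +
        (1 / 2) * ‖((N * B - B * N) * ρ).trace + ((A * D - D * A) * ρ).trace‖ ≥
      (1 / 2) * ‖((A * B - B * A) * ρ).trace‖ := by
  obtain ⟨C, hC⟩ : ∃ C : Matrix (Fin n) (Fin n) ℂ, ρ = C.conjTranspose * C := by
    open scoped MatrixOrder in
    exact CStarAlgebra.nonneg_iff_eq_star_mul_self.mp hρ.nonneg
  have h1 : A * B - B * A =
      -((N * B - B * N) + (A * D - D * A)) - N * D + D * N := by
    have h2 : (A + N) * (B + D) - (B + D) * (A + N) = 0 := sub_eq_zero.mpr hcomm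
    rw [← sub_eq_zero, ← h2]
    noncomm_ring
  have h3 : ((A * B - B * A) * ρ).trace =
      -(((N * B - B * N) * ρ).trace + ((A * D - D * A) * ρ).trace)
        - (N * D * ρ).trace + (D * N * ρ).trace := by
    rw [h1]
    simp only [Matrix.add_mul, Matrix.sub_mul, Matrix.neg_mul, Matrix.trace_add,
      Matrix.trace_sub, Matrix.trace_neg]
  have e1 := aux_cs (C * N) (C * D)
  have e2 := aux_cs (C * D) (C * N)
  rw [← aux_tr C _ _ hN, ← aux_tr C _ _ hD, ← aux_tr C _ _ hD, ← hC] at e1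
  rw [← aux_tr C _ _ hN, ← aux_tr C _ _ hD, ← aux_tr C _ _ hN, ← hC] at e2
  rw [h3]
  have e3 := norm_add_le (-(((N * B - B * N) * ρ).trace + ((A * D - D * A) * ρ).trace)
        - (N * D * ρ).trace) (D * N * ρ).trace
  have e4 := norm_sub_le (-(((N * B - B * N) * ρ).trace + ((A * D - D * A) * ρ).trace))
        (N * D * ρ).trace
  rw [norm_neg] at e4
  linarith
end

section
/- Constraint for error-free measurements: let A, B, N, D be Hermitian n×n complex matrices such that (A + N)(B + D) = (B + D)(A + N), and let ρ be a density matrix with Tr[N²ρ] = 0 (the error in measuring A vanishes). Then σ(A;ρ)·(Tr[D²ρ])^{1/2} ≥ (1/2)·|Tr[(AB − BA)ρ]|. -/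
open ComplexOrder

open Matrix in
theorem trace_cs_aux {n : ℕ} (P Q : Matrix (Fin n) (Fin n) ℂ) :
    ‖(Pᴴ * Q).trace‖ ≤ Real.sqrt ((Pᴴ * P).trace.re) * Real.sqrt ((Qᴴ * Q).trace.re) := by
  have key : ∀ X Y : Matrix (Fin n) (Fin n) ℂ,
      (Xᴴ * Y).trace = ∑ p : Fin n × Fin n, star (X p.2 p.1) * Y p.2 p.1 := by
    intro X Y
    rw [Fintype.sum_prod_type]
    simp [Matrix.trace, Matrix.mul_apply]
  have self : ∀ X : Matrix (Fin n) (Fin n) ℂ,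
      (Xᴴ * X).trace.re = ∑ p : Fin n × Fin n, ‖X p.2 p.1‖ ^ 2 := by
    intro X
    rw [key, Complex.re_sum]
    refine Finset.sum_congr rfl fun p _ => ?_
    rw [← Complex.normSq_eq_norm_sq, Complex.normSq_apply]
    simp
  rw [self, self, key]
  refine (norm_sum_le _ _).trans ?_
  simp only [norm_mul, norm_star]
  exact Real.sum_mul_le_sqrt_mul_sqrt _ _ _

open Matrix in
/-- Constraint for error-free measurements. -/
theorem errorfree_constraint {n : ℕ} (hn : 0 < n)
    (A B N D ρ : Matrix (Fin n) (Fin n) ℂ)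
    (hA : A.IsHermitian) (hB : B.IsHermitian)
    (hN : N.IsHermitian) (hD : D.IsHermitian)
    (hcomm : (A + N) * (B + D) = (B + D) * (A + N))
    (hρ : ρ.PosSemidef) (hρtr : ρ.trace = 1)
    (herr : (N * N * ρ).trace = 0) :
    stddev A ρ * Real.sqrt ((D * D * ρ).trace.re) ≥
      (1 / 2) * ‖((A * B - B * A) * ρ).trace‖ := by
  obtain ⟨C, hC⟩ : ∃ C : Matrix (Fin n) (Fin n) ℂ, ρ = Cᴴ * C := by
    open scoped MatrixOrder in
    exact CStarAlgebra.nonneg_iff_eq_star_mul_self.mp hρ.nonneg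
  have tr : ∀ X Y : Matrix (Fin n) (Fin n) ℂ, X.IsHermitian →
      ((X * Cᴴ)ᴴ * (Y * Cᴴ)).trace = (X * Y * ρ).trace := by
    intro X Y hX
    rw [conjTranspose_mul, conjTranspose_conjTranspose, hX.eq, hC, ← Matrix.mul_assoc (X * Y),
      Matrix.trace_mul_comm (X * Y * Cᴴ) C]
    simp only [Matrix.mul_assoc]
  have hNC : N * Cᴴ = 0 := by
    rw [← tr N N hN] at herr
    exact Matrix.trace_conjTranspose_mul_self_eq_zero_iff.mp herr
  have hNρ : N * ρ = 0 := by rw [hC, ← Matrix.mul_assoc, hNC, Matrix.zero_mul]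
  have hρN : ρ * N = 0 := by
    have := congrArg conjTranspose hNρ
    rwa [conjTranspose_mul, hρ.1.eq, hN.eq, conjTranspose_zero] at this
  have hNX : ∀ X : Matrix (Fin n) (Fin n) ℂ, (N * X * ρ).trace = 0 := by
    intro X
    rw [Matrix.trace_mul_comm, ← Matrix.mul_assoc, hρN]; simp
  have hXN : ∀ X : Matrix (Fin n) (Fin n) ℂ, (X * N * ρ).trace = 0 := by
    intro X
    rw [Matrix.mul_assoc, hNρ]; simp
  set a : ℝ := (A * ρ).trace.re with ha
  set A0 : Matrix (Fin n) (Fin n) ℂ := A - (a : ℂ) • 1 with hA0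
  have hA0h : A0.IsHermitian := by
    refine hA.sub ?_
    simp [Matrix.IsHermitian, conjTranspose_smul]
  have hc : ((A * B - B * A) * ρ).trace = (D * A0 * ρ).trace - (A0 * D * ρ).trace := by
    have h := congrArg (fun M => (M * ρ).trace) hcomm
    simp only [Matrix.add_mul, Matrix.mul_add, Matrix.trace_add, hNX, hXN] at h
    simp only [hA0, Matrix.sub_mul, Matrix.mul_sub, Matrix.trace_sub, Matrix.smul_mul,
      Matrix.mul_smul, Matrix.one_mul, Matrix.mul_one]
    linear_combination h
  have hs : (A0 * A0 * ρ).trace.re = (A * A * ρ).trace.re - a ^ 2 := by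
    simp only [hA0, Matrix.sub_mul, Matrix.mul_sub, Matrix.trace_sub, Matrix.smul_mul,
      Matrix.mul_smul, Matrix.one_mul, Matrix.mul_one, Matrix.trace_smul, hρtr]
    simp [← ha]
    ring
  have h1 := trace_cs_aux (A0 * Cᴴ) (D * Cᴴ)
  have h2 := trace_cs_aux (D * Cᴴ) (A0 * Cᴴ)
  rw [tr _ _ hA0h, tr _ _ hA0h, tr _ _ hD, hs] at h1
  rw [tr _ _ hA0h, tr _ _ hD, tr _ _ hD, hs] at h2
  have h3 := norm_sub_le (D * A0 * ρ).trace (A0 * D * ρ).trace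
  rw [hc, stddev, ← ha]
  linarith
end

section
/- Realization theorem for instruments (finite-dimensional case): let X be a nonempty finite set and {I_x}_{x∈X} a family of linear maps on n×n complex matrices such that each I_x is completely positive and Σ_{x∈X} Tr[I_x(ρ)] = Tr[ρ] for all matrices ρ. Then there exist a positive integer m, a unit vector ξ ∈ ℂᵐ, a unitary nm×nm complex matrix U (acting on ℂⁿ ⊗ ℂᵐ via the Kronecker product), and a family {P_x}_{x∈X} of Hermitian m×m matrices with P_x² = P_x, P_x P_y = 0 for x ≠ y, and Σ_{x∈X} P_x = I, such that for all n×n matrices ρ and all x ∈ X: I_x(ρ) = Tr_K[(I⊗P_x)·U(ρ⊗|ξ⟩⟨ξ|)U†]. -/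
open ComplexOrder Kronecker Matrix

/-- The Choi matrix of a linear map on `n×n` matrices: the entry at
`((i,k),(j,l))` is `(Φ(E_{ij}))_{kl}`. -/
noncomputable def choiMatrix {n : ℕ}
    (Φ : Matrix (Fin n) (Fin n) ℂ →ₗ[ℂ] Matrix (Fin n) (Fin n) ℂ) :
    Matrix (Fin n × Fin n) (Fin n × Fin n) ℂ :=
  Matrix.of fun p q => (Φ (Matrix.single p.1 q.1 1)) p.2 q.2

/-- A linear map on matrices is completely positive if its Choi matrix is
positive semidefinite. -/
def IsCompletelyPositive {n : ℕ}
    (Φ : Matrix (Fin n) (Fin n) ℂ →ₗ[ℂ] Matrix (Fin n) (Fin n) ℂ) : Prop :=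
  (choiMatrix Φ).PosSemidef

/-- The rank-one projection `|ξ⟩⟨ξ|` onto a vector `ξ`. -/
noncomputable def rankOneProj {m : ℕ} (ξ : Fin m → ℂ) : Matrix (Fin m) (Fin m) ℂ :=
  Matrix.vecMulVec ξ (star ξ)

/-- The partial trace over the second tensor factor. -/
noncomputable def trK {n m : ℕ} (X : Matrix (Fin n × Fin m) (Fin n × Fin m) ℂ) :
    Matrix (Fin n) (Fin n) ℂ :=
  Matrix.of fun i j => ∑ k, X (i, k) (j, k)

/-- Realization theorem for instruments (finite-dimensional case). -/
theorem instrument_realization {n : ℕ} (hn : 0 < n)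
    (X : Type*) [Fintype X] [DecidableEq X] [Nonempty X]
    (I : X → (Matrix (Fin n) (Fin n) ℂ →ₗ[ℂ] Matrix (Fin n) (Fin n) ℂ))
    (hCP : ∀ x, IsCompletelyPositive (I x))
    (htr : ∀ ρ : Matrix (Fin n) (Fin n) ℂ, ∑ x, (I x ρ).trace = ρ.trace) :
    ∃ (m : ℕ) (_ : 0 < m) (ξ : Fin m → ℂ)
      (U : Matrix (Fin n × Fin m) (Fin n × Fin m) ℂ)
      (P : X → Matrix (Fin m) (Fin m) ℂ),
      star ξ ⬝ᵥ ξ = 1 ∧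
      U * Uᴴ = 1 ∧ Uᴴ * U = 1 ∧
      (∀ x, (P x).IsHermitian) ∧
      (∀ x, P x * P x = P x) ∧
      (∀ x y, x ≠ y → P x * P y = 0) ∧
      (∑ x, P x) = 1 ∧
      ∀ (ρ : Matrix (Fin n) (Fin n) ℂ) (x : X),
        I x ρ = trK (((1 : Matrix (Fin n) (Fin n) ℂ) ⊗ₖ P x) *
          (U * (ρ ⊗ₖ rankOneProj ξ) * Uᴴ)) := by
  classical
  have hB : ∀ x, ∃ B : Matrix (Fin n × Fin n) (Fin n × Fin n) ℂ, choiMatrix (I x) = Bᴴ * B :=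
    fun x => by
      have h := hCP x
      unfold IsCompletelyPositive at h
      open scoped MatrixOrder in
      obtain ⟨b, hb⟩ := CStarAlgebra.nonneg_iff_eq_star_mul_self.mp h.nonneg
      exact ⟨b, hb⟩
  choose B hB using hB
  -- the action on matrix units
  have hI1 : ∀ x i j k l, (I x (Matrix.single i j 1)) k l
      = ∑ a, star (B x a (i, k)) * B x a (j, l) := by
    intro x i j k l
    have h := congrFun (congrFun (hB x) (i, k)) (j, l)
    simpa [choiMatrix, Matrix.mul_apply] using h
  have hI : ∀ x (ρ : Matrix (Fin n) (Fin n) ℂ) k l, (I x ρ) k l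
      = ∑ i, ∑ j, ρ i j * ∑ a, star (B x a (i, k)) * B x a (j, l) := by
    intro x ρ k l
    conv_lhs => rw [Matrix.matrix_eq_sum_single ρ]
    simp only [map_sum, Matrix.sum_apply]
    refine Finset.sum_congr rfl fun i _ => Finset.sum_congr rfl fun j _ => ?_
    rw [← hI1, show Matrix.single i j (ρ i j) = ρ i j • Matrix.single i j (1:ℂ) by simp,
      map_smul, Matrix.smul_apply, smul_eq_mul]
  obtain ⟨m, ⟨e⟩⟩ : ∃ m, Nonempty (X × (Fin n × Fin n) ≃ Fin m) := ⟨_, ⟨Fintype.equivFin _⟩⟩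
  let z : Fin m := e (Classical.arbitrary X, (⟨0, hn⟩, ⟨0, hn⟩))
  have hm : 0 < m := Fin.pos z
  let W : Matrix (Fin n × Fin m) (Fin n) ℂ :=
    Matrix.of fun p i => star (B (e.symm p.2).1 (e.symm p.2).2 (i, p.1))
  have hW : ∀ i j, ∑ p, star (W p i) * W p j = if i = j then 1 else 0 := by
    intro i j
    have h := htr (Matrix.single j i 1)
    simp only [Matrix.trace, Matrix.diag, hI1] at h
    rw [Fintype.sum_prod_type, Finset.sum_comm, ← e.sum_comp, Fintype.sum_prod_type]
    simp only [W, Matrix.of_apply, Equiv.symm_apply_apply, star_star]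
    trans ∑ x, ∑ k, ∑ a, star (B x a (j, k)) * B x a (i, k)
    · refine Finset.sum_congr rfl fun x _ => ?_
      rw [Finset.sum_comm]
      refine Finset.sum_congr rfl fun k _ => Finset.sum_congr rfl fun a _ => mul_comm _ _
    · rw [h]
      by_cases hij : i = j
      · subst hij; simp [Matrix.single_apply]
      · rw [if_neg hij]
        refine Finset.sum_eq_zero fun k _ => ?_
        rw [Matrix.single_apply, if_neg]
        rintro ⟨rfl, rfl⟩; exact hij rfl
  let v : Fin n × Fin m → EuclideanSpace ℂ (Fin n × Fin m) :=
    fun p => WithLp.toLp 2 (fun q => W q p.1)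
  let s : Set (Fin n × Fin m) := {p | p.2 = z}
  have hv : Orthonormal ℂ (s.restrict v) := by
    rw [orthonormal_iff_ite]
    rintro ⟨⟨i, a⟩, ha⟩ ⟨⟨j, b⟩, hb⟩
    simp only [s, Set.mem_setOf_eq] at ha hb
    subst ha hb
    have h := hW i j
    simp only [Set.restrict_apply, v, PiLp.inner_apply, RCLike.inner_apply, Subtype.mk.injEq,
      Prod.mk.injEq, and_true]
    rw [← h]
    exact Finset.sum_congr rfl fun q _ => mul_comm _ _
  obtain ⟨b, hb⟩ := hv.exists_orthonormalBasis_extension_of_card_eq (by simp)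
  let U : Matrix (Fin n × Fin m) (Fin n × Fin m) ℂ := Matrix.of fun q p => b p q
  have hUU : Uᴴ * U = 1 := by
    ext p q
    have h := orthonormal_iff_ite.mp b.orthonormal p q
    simp only [PiLp.inner_apply, RCLike.inner_apply] at h
    rw [Matrix.mul_apply, Matrix.one_apply, ← h]
    exact Finset.sum_congr rfl fun q _ => mul_comm _ _
  have hUW : ∀ q i, U q (i, z) = W q i := by
    intro q i
    have h := hb (i, z) rfl
    simp [U, h, v]
  let ξ : Fin m → ℂ := Pi.single z 1
  have hmid : ∀ ρ : Matrix (Fin n) (Fin n) ℂ,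
      U * (ρ ⊗ₖ rankOneProj ξ) * Uᴴ = W * ρ * Wᴴ := by
    intro ρ
    let J : Matrix (Fin n × Fin m) (Fin n) ℂ :=
      Matrix.of fun p i => if p = (i, z) then 1 else 0
    have hJ : ρ ⊗ₖ rankOneProj ξ = J * ρ * Jᴴ := by
      ext ⟨i, a⟩ ⟨j, c⟩
      by_cases ha : a = z <;> by_cases hc : c = z <;>
        simp [J, Matrix.mul_apply, rankOneProj, Matrix.vecMulVec_apply, ξ, ha, hc, Pi.single_apply]
    have hUJ : U * J = W := by
      ext q i
      simp [Matrix.mul_apply, J, hUW]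
    rw [hJ, ← hUJ, Matrix.conjTranspose_mul]
    simp only [Matrix.mul_assoc]
  refine ⟨m, hm, ξ, U, fun x => Matrix.diagonal fun μ => if (e.symm μ).1 = x then 1 else 0,
    ?_, mul_eq_one_comm.mp hUU, hUU, ?_, ?_, ?_, ?_, ?_⟩
  · simp [ξ]
  · intro x
    rw [Matrix.isHermitian_diagonal_iff]
    intro μ
    split_ifs <;> simp
  · intro x
    simp
  · intro x y hxy
    rw [Matrix.diagonal_mul_diagonal, ← Matrix.diagonal_zero]
    congr 1
    ext μ
    by_cases h : (e.symm μ).1 = x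
    · simp [h, hxy]
    · simp [h]
  · ext μ ν
    rw [Matrix.sum_apply]
    by_cases h : μ = ν
    · subst h; simp
    · simp [h]
  · intro ρ x
    rw [hmid]
    ext k l
    rw [hI]
    have h1 : ∀ (M : Matrix (Fin n × Fin m) (Fin n × Fin m) ℂ) (d : Fin m → ℂ) p q,
        (((1 : Matrix (Fin n) (Fin n) ℂ) ⊗ₖ Matrix.diagonal d) * M) p q = d p.2 * M p q := by
      intro M d p q
      rw [← Matrix.diagonal_one, Matrix.diagonal_kronecker_diagonal, Matrix.diagonal_mul]
      simp
    simp only [trK, Matrix.of_apply, h1]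
    rw [← e.sum_comp, Fintype.sum_prod_type]
    simp only [Equiv.symm_apply_apply]
    rw [Finset.sum_eq_single x]
    · simp only [if_true, one_mul, Matrix.mul_apply, Matrix.conjTranspose_apply, W,
        Matrix.of_apply, Equiv.symm_apply_apply, star_star, Finset.sum_mul, Finset.mul_sum]
      trans ∑ i, ∑ a, ∑ j, ρ i j * (star (B x a (i, k)) * B x a (j, l))
      · exact Finset.sum_congr rfl fun i _ => Finset.sum_comm
      rw [Finset.sum_comm]
      refine Finset.sum_congr rfl fun a _ => ?_
      rw [Finset.sum_comm]
      refine Finset.sum_congr rfl fun j _ => Finset.sum_congr rfl fun i _ => ?_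
      ring
    · intro y _ hy; simp [hy]
    · simp
end

section
/- Characterization of simultaneous measurement by the POVM: let (ℂᵐ, ξ, U, M) be a finite-dimensional measuring process for ℂⁿ, let A and B be Hermitian n×n matrices, let f, g : ℝ → ℝ, and let ρ be a density matrix on ℂⁿ. Define the POVM of the measuring process by Π_y = Tr_K[U†(I⊗P^M_y)U·(I⊗|ξ⟩⟨ξ|)] for y ∈ ℝ. Then the measuring process simultaneously measures A and B with f and g in ρ — that is, U†(I⊗f(M))U ≡_{ρ⊗|ξ⟩⟨ξ|} A⊗I and U†(I⊗g(M))U ≡_{ρ⊗|ξ⟩⟨ξ|} B⊗I — if and only if for every pair of disjoint finite subsets Δ, Γ of ℝ: Tr[(Σ_{y: f(y)∈Δ} Π_y)·(Σ_{a∈Γ} P^A_a)·ρ] = 0 and Tr[(Σ_{y: g(y)∈Δ} Π_y)·(Σ_{b∈Γ} P^B_b)·ρ] = 0. -/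
open ComplexOrder Kronecker Matrix

variable {ι : Type*} [Fintype ι] [DecidableEq ι]

/-- The spectral projection `P^C_x` of a Hermitian matrix `C` at `x ∈ ℝ`:
the orthogonal projection onto the eigenspace `ker(C − xI)` (the zero matrix
if `x` is not an eigenvalue, and junk value `0` if `C` is not Hermitian). -/
noncomputable def specProj (C : Matrix ι ι ℂ) (x : ℝ) : Matrix ι ι ℂ :=
  if h : C.IsHermitian then
    (h.eigenvectorUnitary : Matrix ι ι ℂ) *
      Matrix.diagonal (fun i => if h.eigenvalues i = x then (1 : ℂ) else 0) *
      star (h.eigenvectorUnitary : Matrix ι ι ℂ)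
  else 0

/-- The finite set of eigenvalues of a Hermitian matrix. -/
noncomputable def eigFinset (C : Matrix ι ι ℂ) : Finset ℝ :=
  if h : C.IsHermitian then Finset.univ.image h.eigenvalues else ∅

/-- The function `f(C) = Σ_x f(x)·P^C_x`, summing over the eigenvalues of `C`. -/
noncomputable def matFun (f : ℝ → ℝ) (C : Matrix ι ι ℂ) : Matrix ι ι ℂ :=
  ∑ x ∈ eigFinset C, (f x : ℂ) • specProj C x

/-- Two Hermitian matrices `C` and `D` are commuting in the state `τ` if
`(P^C_x P^D_y − P^D_y P^C_x)·τ = 0` for all `x, y ∈ ℝ`. -/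
def CommutingIn (C D τ : Matrix ι ι ℂ) : Prop :=
  ∀ x y : ℝ, (specProj C x * specProj D y - specProj D y * specProj C x) * τ = 0

/-- `C` and `D` have a quantum identical correlation in `τ` (written `C ≡_τ D`)
if they are commuting in `τ` and the joint probability distribution
`μ(x,y) = Tr[P^C_x P^D_y τ]` satisfies `Σ_x μ(x,x) = 1`. -/
def QIC (C D τ : Matrix ι ι ℂ) : Prop :=
  CommutingIn C D τ ∧
    (∑ x ∈ eigFinset C, (specProj C x * specProj D x * τ).trace) = 1

/-- The POVM element `Π_y = Tr_K[U†(I⊗P^M_y)U·(I⊗|ξ⟩⟨ξ|)]` of a measuring process. -/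
noncomputable def povmOf {n m : ℕ} (U : Matrix (Fin n × Fin m) (Fin n × Fin m) ℂ)
    (M : Matrix (Fin m) (Fin m) ℂ) (ξ : Fin m → ℂ) (y : ℝ) : Matrix (Fin n) (Fin n) ℂ :=
  trK (Uᴴ * ((1 : Matrix (Fin n) (Fin n) ℂ) ⊗ₖ specProj M y) * U *
    ((1 : Matrix (Fin n) (Fin n) ℂ) ⊗ₖ rankOneProj ξ))

section helpers

variable {κ : Type*} [Fintype κ] [DecidableEq κ]

lemma specProj_conj (C : Matrix κ κ ℂ) (x : ℝ) : (specProj C x)ᴴ = specProj C x := by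
  unfold specProj
  split_ifs with h
  · rw [Matrix.conjTranspose_mul, Matrix.conjTranspose_mul, Matrix.diagonal_conjTranspose,
      Matrix.star_eq_conjTranspose, Matrix.conjTranspose_conjTranspose, Matrix.mul_assoc]
    congr 3
    funext i
    simp only [Pi.star_apply]
    split_ifs <;> simp
  · simp

lemma specProj_mul (C : Matrix κ κ ℂ) (x y : ℝ) :
    specProj C x * specProj C y = if x = y then specProj C x else 0 := by
  unfold specProj
  split_ifs with h hxy hxy
  · subst hxy
    have hu : star (h.eigenvectorUnitary : Matrix κ κ ℂ) * (h.eigenvectorUnitary : Matrix κ κ ℂ) = 1 :=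
      Unitary.coe_star_mul_self _
    simp only [Matrix.mul_assoc]
    rw [← Matrix.mul_assoc (star _) (h.eigenvectorUnitary : Matrix κ κ ℂ), hu, Matrix.one_mul,
      ← Matrix.mul_assoc (Matrix.diagonal _), Matrix.diagonal_mul_diagonal]
    congr 3
    funext i
    simp
  · have hu : star (h.eigenvectorUnitary : Matrix κ κ ℂ) * (h.eigenvectorUnitary : Matrix κ κ ℂ) = 1 :=
      Unitary.coe_star_mul_self _
    simp only [Matrix.mul_assoc]
    rw [← Matrix.mul_assoc (star _) (h.eigenvectorUnitary : Matrix κ κ ℂ), hu, Matrix.one_mul,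
      ← Matrix.mul_assoc (Matrix.diagonal _), Matrix.diagonal_mul_diagonal]
    have : (fun i => (if h.eigenvalues i = x then (1:ℂ) else 0) *
        (if h.eigenvalues i = y then (1:ℂ) else 0)) = fun _ => 0 := by
      funext i
      split_ifs with h1 h2
      · exact absurd (h1.symm.trans h2) hxy
      all_goals simp
    rw [this]
    simp
  · simp
  · simp

lemma specProj_zero (C : Matrix κ κ ℂ) (x : ℝ) (hx : x ∉ eigFinset C) : specProj C x = 0 := by
  unfold specProj
  unfold eigFinset at hx
  split_ifs with h
  · rw [dif_pos h] at hx
    have : (fun i => if h.eigenvalues i = x then (1:ℂ) else 0) = fun _ => 0 := by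
      funext i
      rw [if_neg]
      intro hi
      exact hx (Finset.mem_image.2 ⟨i, Finset.mem_univ _, hi⟩)
    rw [this]
    simp
  · rfl

lemma specProj_sum' (C : Matrix κ κ ℂ) (h : C.IsHermitian) (φ : ℝ → ℂ) :
    ∑ x ∈ eigFinset C, φ x • specProj C x = (h.eigenvectorUnitary : Matrix κ κ ℂ) *
      Matrix.diagonal (fun i => φ (h.eigenvalues i)) *
      star (h.eigenvectorUnitary : Matrix κ κ ℂ) := by
  simp only [specProj, dif_pos h]
  have : Matrix.diagonal (fun i => φ (h.eigenvalues i)) = ∑ x ∈ eigFinset C,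
      φ x • Matrix.diagonal (fun i => if h.eigenvalues i = x then (1:ℂ) else 0) := by
    ext i j
    rw [Matrix.sum_apply]
    by_cases hij : i = j
    · subst hij
      simp [eigFinset, dif_pos h]
    · simp [Matrix.diagonal_apply_ne _ hij]
  rw [this, Finset.mul_sum, Finset.sum_mul]
  refine Finset.sum_congr rfl fun x _ => ?_
  simp

lemma specProj_sum (C : Matrix κ κ ℂ) (h : C.IsHermitian) :
    ∑ x ∈ eigFinset C, specProj C x = 1 := by
  have := specProj_sum' C h (fun _ => 1)
  simp only [one_smul] at this
  rw [this]
  have h1 : Matrix.diagonal (fun _ : κ => (1:ℂ)) = 1 := rfl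
  rw [h1, Matrix.mul_one]
  exact Unitary.coe_mul_star_self _

lemma specProj_decomp (C : Matrix κ κ ℂ) (h : C.IsHermitian) :
    ∑ x ∈ eigFinset C, (x : ℂ) • specProj C x = C := by
  rw [specProj_sum' C h (fun x => (x:ℂ))]
  conv_rhs => rw [h.spectral_theorem]
  rfl

lemma specProj_sum_of_subset (C : Matrix κ κ ℂ) (h : C.IsHermitian) (S : Finset ℝ)
    (hS : eigFinset C ⊆ S) : ∑ x ∈ S, specProj C x = 1 := by
  rw [← specProj_sum C h]
  symm
  exact Finset.sum_subset hS fun x _ hx => specProj_zero C x hx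

lemma specProj_mul_self (C : Matrix κ κ ℂ) (h : C.IsHermitian) (x : ℝ) :
    specProj C x * C = (x : ℂ) • specProj C x := by
  have e : specProj C x * C =
      specProj C x * ∑ y ∈ eigFinset C, (y : ℂ) • specProj C y := by
    rw [specProj_decomp C h]
  rw [e, Finset.mul_sum]
  simp only [Matrix.mul_smul, specProj_mul, smul_ite, smul_zero]
  rw [Finset.sum_ite_eq]
  split_ifs with hx
  · rfl
  · rw [specProj_zero C x hx, smul_zero]

lemma mul_specProj_self (C : Matrix κ κ ℂ) (h : C.IsHermitian) (x : ℝ) :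
    C * specProj C x = (x : ℂ) • specProj C x := by
  have := congrArg Matrix.conjTranspose (specProj_mul_self C h x)
  rw [Matrix.conjTranspose_mul, Matrix.conjTranspose_smul, specProj_conj, h.eq] at this
  simpa using this

lemma specProj_unique (C : Matrix κ κ ℂ) (h : C.IsHermitian) (Q : ℝ → Matrix κ κ ℂ) (S : Finset ℝ)
    (hQ0 : ∀ x, x ∉ S → Q x = 0) (hQ1 : ∑ x ∈ S, Q x = 1)
    (hQ : ∀ x, C * Q x = (x : ℂ) • Q x) (x : ℝ) : specProj C x = Q x := by
  have hz : ∀ a b, a ≠ b → specProj C a * Q b = 0 := by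
    intro a b hab
    have h1 : (a : ℂ) • (specProj C a * Q b) = (b : ℂ) • (specProj C a * Q b) := by
      rw [← Matrix.smul_mul, ← specProj_mul_self C h, Matrix.mul_assoc, hQ, Matrix.mul_smul]
    rw [← sub_eq_zero, ← sub_smul, smul_eq_zero] at h1
    rcases h1 with h1 | h1
    · exact absurd (by exact_mod_cast sub_eq_zero.1 h1) hab
    · exact h1
  have e1 : specProj C x = specProj C x * Q x := by
    conv_lhs => rw [← Matrix.mul_one (specProj C x), ← hQ1, Finset.mul_sum]
    refine Finset.sum_eq_single x (fun b _ hb => hz _ _ hb.symm) fun hx => ?_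
    rw [hQ0 x hx, Matrix.mul_zero]
  have e2 : Q x = specProj C x * Q x := by
    conv_lhs => rw [← Matrix.one_mul (Q x), ← specProj_sum C h, Finset.sum_mul]
    refine Finset.sum_eq_single x (fun b _ hb => hz _ _ hb) fun hx => ?_
    rw [specProj_zero C x hx, Matrix.zero_mul]
  rw [e1, ← e2]

lemma trace_sq_nonneg (X τ : Matrix κ κ ℂ) (hτ : τ.PosSemidef) : 0 ≤ (Xᴴ * X * τ).trace := by
  have h := (hτ.mul_mul_conjTranspose_same X).trace_nonneg
  rwa [Matrix.mul_assoc, Matrix.trace_mul_comm, Matrix.mul_assoc, Matrix.trace_mul_comm] at h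

open scoped MatrixOrder Matrix.Norms.L2Operator in
lemma mul_eq_zero_of_trace (X τ : Matrix κ κ ℂ) (hτ : τ.PosSemidef)
    (h : (Xᴴ * X * τ).trace = 0) : X * τ = 0 := by
  obtain ⟨B, rfl⟩ := (CStarAlgebra.nonneg_iff_eq_star_mul_self (A := Matrix κ κ ℂ)).1 hτ.nonneg
  rw [Matrix.star_eq_conjTranspose] at *
  have h2 : ((X * Bᴴ)ᴴ * (X * Bᴴ)).trace = 0 := by
    rw [← h, Matrix.conjTranspose_mul, Matrix.conjTranspose_conjTranspose]
    simp only [Matrix.mul_assoc]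
    rw [Matrix.trace_mul_comm]
    simp only [Matrix.mul_assoc]
  rw [Matrix.trace_conjTranspose_mul_self_eq_zero_iff] at h2
  rw [← Matrix.mul_assoc, h2, Matrix.zero_mul]

lemma QIC_iff (C D τ : Matrix κ κ ℂ) (hC : C.IsHermitian) (hD : D.IsHermitian)
    (hτ : τ.PosSemidef) (htr : τ.trace = 1) :
    QIC C D τ ↔ ∀ x y : ℝ, x ≠ y → (specProj C x * specProj D y * τ).trace = 0 := by
  have hcS : ∑ x ∈ eigFinset C ∪ eigFinset D, specProj C x = 1 :=
    specProj_sum_of_subset C hC _ Finset.subset_union_left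
  have hdS : ∑ x ∈ eigFinset C ∪ eigFinset D, specProj D x = 1 :=
    specProj_sum_of_subset D hD _ Finset.subset_union_right
  set S := eigFinset C ∪ eigFinset D with hS
  constructor
  · rintro ⟨hcomm, hsum⟩
    have hc : ∀ x y, specProj C x * specProj D y * τ = specProj D y * specProj C x * τ := by
      intro x y
      have := hcomm x y
      rwa [Matrix.sub_mul, sub_eq_zero] at this
    have hnn : ∀ x y, 0 ≤ (specProj C x * specProj D y * τ).trace := by
      intro x y
      have h1 := trace_sq_nonneg (specProj D y * specProj C x) τ hτ
      rw [Matrix.conjTranspose_mul, specProj_conj, specProj_conj] at h1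
      have e : specProj C x * specProj D y * (specProj D y * specProj C x) * τ
          = specProj C x * specProj D y * τ := by
        calc _ = specProj C x * (specProj D y * specProj D y) * specProj C x * τ := by
              simp only [Matrix.mul_assoc]
          _ = specProj C x * (specProj D y * specProj C x * τ) := by
              rw [specProj_mul, if_pos rfl]; simp only [Matrix.mul_assoc]
          _ = (specProj C x * specProj C x) * specProj D y * τ := by
              rw [← hc]; simp only [Matrix.mul_assoc]
          _ = _ := by rw [specProj_mul, if_pos rfl]
      rwa [e] at h1
    have htot : ∑ x ∈ S, ∑ y ∈ S, (specProj C x * specProj D y * τ).trace = 1 := by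
      have e : ((∑ x ∈ S, specProj C x) * (∑ y ∈ S, specProj D y) * τ).trace = 1 := by
        rw [hcS, hdS, Matrix.one_mul, Matrix.one_mul, htr]
      rw [← e]
      simp only [Finset.sum_mul, Finset.mul_sum, Matrix.trace_sum]
      rw [Finset.sum_comm]
    have hdiag : ∑ x ∈ S, (specProj C x * specProj D x * τ).trace = 1 := by
      rw [← hsum]
      symm
      refine Finset.sum_subset Finset.subset_union_left fun x _ hx => ?_
      rw [specProj_zero C x hx]; simp
    have hoff : ∑ x ∈ S, ∑ y ∈ S,
        (if x = y then 0 else (specProj C x * specProj D y * τ).trace) = 0 := by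
      have : ∑ x ∈ S, ∑ y ∈ S,
          ((if x = y then 0 else (specProj C x * specProj D y * τ).trace) +
            (if x = y then (specProj C x * specProj D y * τ).trace else 0)) = 1 := by
        rw [← htot]
        refine Finset.sum_congr rfl fun x _ => Finset.sum_congr rfl fun y _ => ?_
        split_ifs <;> simp
      simp only [Finset.sum_add_distrib] at this
      have h2 : ∑ x ∈ S, ∑ y ∈ S,
          (if x = y then (specProj C x * specProj D y * τ).trace else 0) = 1 := by
        rw [← hdiag]
        refine Finset.sum_congr rfl fun x hx => ?_
        rw [Finset.sum_ite_eq, if_pos hx]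
      rw [h2] at this
      simpa using this
    have hnn' : ∀ x y, 0 ≤ (if x = y then 0 else (specProj C x * specProj D y * τ).trace) := by
      intro x y
      split_ifs
      · exact le_rfl
      · exact hnn x y
    intro x y hxy
    by_cases hx : x ∈ eigFinset C
    swap
    · rw [specProj_zero C x hx]; simp
    by_cases hy : y ∈ eigFinset D
    swap
    · rw [specProj_zero D y hy]; simp
    have h1 := (Finset.sum_eq_zero_iff_of_nonneg
      (fun x _ => Finset.sum_nonneg fun y _ => hnn' x y)).1 hoff x (Finset.mem_union_left _ hx)
    have h2 := (Finset.sum_eq_zero_iff_of_nonneg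
      (fun y _ => hnn' x y)).1 h1 y (Finset.mem_union_right _ hy)
    rwa [if_neg hxy] at h2
  · intro h0
    have hCx : ∀ x, (specProj C x * specProj D x * τ).trace = (specProj C x * τ).trace := by
      intro x
      have : (specProj C x * τ).trace = ∑ y ∈ S, (specProj C x * specProj D y * τ).trace := by
        rw [← Matrix.trace_sum, ← Finset.sum_mul, ← Finset.mul_sum, hdS, Matrix.mul_one]
      rw [this, Finset.sum_eq_single x (fun b _ hb => h0 _ _ hb.symm)]
      intro hx
      rw [specProj_zero D x (fun h => hx (Finset.mem_union_right _ h))]; simp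
    have hDx : ∀ x, (specProj C x * specProj D x * τ).trace = (specProj D x * τ).trace := by
      intro x
      have : (specProj D x * τ).trace = ∑ y ∈ S, (specProj C y * specProj D x * τ).trace := by
        rw [← Matrix.trace_sum, ← Finset.sum_mul, ← Finset.sum_mul, hcS, Matrix.one_mul]
      rw [this, Finset.sum_eq_single x (fun b _ hb => h0 _ _ hb)]
      intro hx
      rw [specProj_zero C x (fun h => hx (Finset.mem_union_left _ h))]; simp
    have hDC : ∀ x, (specProj D x * specProj C x * τ).trace = (specProj D x * τ).trace := by
      intro x
      have h1 : (specProj D x * specProj C x * τ).trace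
          = star (specProj C x * specProj D x * τ).trace := by
        rw [← Matrix.trace_conjTranspose, Matrix.conjTranspose_mul, Matrix.conjTranspose_mul,
          specProj_conj, specProj_conj, hτ.isHermitian.eq, Matrix.trace_mul_comm]
      rw [h1, hDx, ← Matrix.trace_conjTranspose, Matrix.conjTranspose_mul, specProj_conj,
        hτ.isHermitian.eq, Matrix.trace_mul_comm]
    have heq : ∀ x, specProj C x * τ = specProj D x * τ := by
      intro x
      rw [← sub_eq_zero, ← Matrix.sub_mul]
      refine mul_eq_zero_of_trace _ _ hτ ?_
      rw [Matrix.conjTranspose_sub, specProj_conj, specProj_conj, Matrix.sub_mul, Matrix.mul_sub,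
        Matrix.mul_sub, specProj_mul, specProj_mul, if_pos rfl, if_pos rfl]
      simp only [Matrix.sub_mul, Matrix.trace_sub]
      rw [hDC, hCx]
      ring
    constructor
    · intro x y
      rw [Matrix.sub_mul, Matrix.mul_assoc, Matrix.mul_assoc, ← heq y, heq x, ← Matrix.mul_assoc,
        ← Matrix.mul_assoc, specProj_mul, specProj_mul]
      by_cases hxy : x = y
      · subst hxy
        simp [heq]
      · rw [if_neg hxy, if_neg (Ne.symm hxy)]; simp
    · simp only [hCx]
      rw [← Matrix.trace_sum, ← Finset.sum_mul, specProj_sum C hC, Matrix.one_mul, htr]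

end helpers

lemma trace_trK {n m : ℕ} (Z : Matrix (Fin n × Fin m) (Fin n × Fin m) ℂ)
    (W : Matrix (Fin n) (Fin n) ℂ) :
    (Z * (W ⊗ₖ (1 : Matrix (Fin m) (Fin m) ℂ))).trace = (trK Z * W).trace := by
  simp only [Matrix.trace, Matrix.diag, Matrix.mul_apply, trK, Matrix.of_apply,
    Fintype.sum_prod_type, Matrix.kroneckerMap_apply, Matrix.one_apply, mul_ite, mul_one, mul_zero,
    Finset.sum_ite_eq', Finset.mem_univ, if_true, Finset.sum_mul]
  refine Finset.sum_congr rfl fun i _ => ?_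
  rw [Finset.sum_comm]

lemma specProj_kron {n m : ℕ} (A : Matrix (Fin n) (Fin n) ℂ) (hA : A.IsHermitian)
    (hD : (A ⊗ₖ (1 : Matrix (Fin m) (Fin m) ℂ)).IsHermitian) (x : ℝ) :
    specProj (A ⊗ₖ (1 : Matrix (Fin m) (Fin m) ℂ)) x = specProj A x ⊗ₖ 1 := by
  refine specProj_unique _ hD (fun x => specProj A x ⊗ₖ 1) (eigFinset A) ?_ ?_ ?_ x
  · intro x hx
    simp [specProj_zero A x hx]
  · have := congrArg (fun Z => Z ⊗ₖ (1 : Matrix (Fin m) (Fin m) ℂ)) (specProj_sum A hA)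
    simp only [Matrix.one_kronecker_one] at this
    rw [← this]
    ext i j
    simp [Matrix.sum_apply, Matrix.kroneckerMap_apply, Finset.sum_mul]
  · intro x
    rw [← Matrix.mul_kronecker_mul, mul_specProj_self A hA, Matrix.smul_kronecker, Matrix.mul_one]

lemma matFun_herm {m : ℕ} (M : Matrix (Fin m) (Fin m) ℂ) (f : ℝ → ℝ) :
    (matFun f M)ᴴ = matFun f M := by
  simp [matFun, Matrix.conjTranspose_sum, Matrix.conjTranspose_smul, specProj_conj]

lemma matFun_mul {m : ℕ} (M : Matrix (Fin m) (Fin m) ℂ) (f : ℝ → ℝ) (y : ℝ) :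
    matFun f M * specProj M y = (f y : ℂ) • specProj M y := by
  simp only [matFun, Finset.sum_mul, Matrix.smul_mul, specProj_mul, smul_ite, smul_zero]
  rw [Finset.sum_ite_eq']
  split_ifs with h
  · rfl
  · rw [specProj_zero M y h, smul_zero]

lemma kron_sum {n m : ℕ} (T : Finset ℝ) (P : ℝ → Matrix (Fin m) (Fin m) ℂ) :
    (1 : Matrix (Fin n) (Fin n) ℂ) ⊗ₖ (∑ y ∈ T, P y) = ∑ y ∈ T, (1 : Matrix (Fin n) (Fin n) ℂ) ⊗ₖ P y := by
  ext i j
  simp [Matrix.sum_apply, Matrix.kroneckerMap_apply, Finset.mul_sum]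

lemma specProj_meter {n m : ℕ} (U : Matrix (Fin n × Fin m) (Fin n × Fin m) ℂ)
    (hU : U * Uᴴ = 1) (hU' : Uᴴ * U = 1)
    (M : Matrix (Fin m) (Fin m) ℂ) (hM : M.IsHermitian) (f : ℝ → ℝ)
    (hC : (Uᴴ * ((1 : Matrix (Fin n) (Fin n) ℂ) ⊗ₖ matFun f M) * U).IsHermitian) (x : ℝ) :
    specProj (Uᴴ * ((1 : Matrix (Fin n) (Fin n) ℂ) ⊗ₖ matFun f M) * U) x =
      ∑ y ∈ (eigFinset M).filter (fun y => f y = x),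
        Uᴴ * ((1 : Matrix (Fin n) (Fin n) ℂ) ⊗ₖ specProj M y) * U := by
  refine specProj_unique _ hC (fun x => ∑ y ∈ (eigFinset M).filter (fun y => f y = x),
        Uᴴ * ((1 : Matrix (Fin n) (Fin n) ℂ) ⊗ₖ specProj M y) * U) ((eigFinset M).image f)
        ?_ ?_ ?_ x
  · intro x hx
    apply Finset.sum_eq_zero
    intro y hy
    rw [Finset.mem_filter] at hy
    exact absurd (Finset.mem_image.2 ⟨y, hy.1, hy.2⟩) hx
  · rw [Finset.sum_fiberwise_of_maps_to (fun y hy => Finset.mem_image_of_mem f hy), ← Finset.sum_mul,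
      ← Finset.mul_sum, ← kron_sum, specProj_sum M hM, Matrix.one_kronecker_one, Matrix.mul_one, hU']
  · intro x
    simp only [Finset.mul_sum, Finset.smul_sum]
    refine Finset.sum_congr rfl fun y hy => ?_
    rw [Finset.mem_filter] at hy
    calc _ = Uᴴ * (((1 : Matrix (Fin n) (Fin n) ℂ) ⊗ₖ matFun f M) * ((U * Uᴴ) *
            ((1 : Matrix (Fin n) (Fin n) ℂ) ⊗ₖ specProj M y))) * U := by
          simp only [Matrix.mul_assoc]
      _ = _ := by
          rw [hU, Matrix.one_mul, ← Matrix.mul_kronecker_mul, matFun_mul, hy.2,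
            Matrix.kronecker_smul, Matrix.mul_smul, Matrix.smul_mul, Matrix.mul_one]

lemma trace_povm {n m : ℕ} (ξ : Fin m → ℂ) (U : Matrix (Fin n × Fin m) (Fin n × Fin m) ℂ)
    (M : Matrix (Fin m) (Fin m) ℂ) (Y ρ : Matrix (Fin n) (Fin n) ℂ) (y : ℝ) :
    (Uᴴ * ((1 : Matrix (Fin n) (Fin n) ℂ) ⊗ₖ specProj M y) * U * (Y ⊗ₖ 1) *
      (ρ ⊗ₖ rankOneProj ξ)).trace = (povmOf U M ξ y * Y * ρ).trace := by
  rw [povmOf, Matrix.mul_assoc (trK _), ← trace_trK, Matrix.mul_assoc _ (Y ⊗ₖ 1),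
    Matrix.mul_assoc _ (1 ⊗ₖ rankOneProj ξ), ← Matrix.mul_kronecker_mul, ← Matrix.mul_kronecker_mul,
    Matrix.one_mul, Matrix.one_mul, Matrix.mul_one]

lemma QIC_iff_povm {n m : ℕ}
    (ξ : Fin m → ℂ) (hξ : star ξ ⬝ᵥ ξ = 1)
    (U : Matrix (Fin n × Fin m) (Fin n × Fin m) ℂ)
    (hU : U * Uᴴ = 1) (hU' : Uᴴ * U = 1)
    (M : Matrix (Fin m) (Fin m) ℂ) (hM : M.IsHermitian)
    (A : Matrix (Fin n) (Fin n) ℂ) (hA : A.IsHermitian)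
    (f : ℝ → ℝ)
    (ρ : Matrix (Fin n) (Fin n) ℂ) (hρ : ρ.PosSemidef) (hρtr : ρ.trace = 1) :
    QIC (Uᴴ * ((1 : Matrix (Fin n) (Fin n) ℂ) ⊗ₖ matFun f M) * U)
        (A ⊗ₖ (1 : Matrix (Fin m) (Fin m) ℂ)) (ρ ⊗ₖ rankOneProj ξ) ↔
    ∀ Δ Γ : Finset ℝ, Disjoint Δ Γ →
      ((∑ y ∈ (eigFinset M).filter (fun y => f y ∈ Δ), povmOf U M ξ y) *
          (∑ a ∈ Γ, specProj A a) * ρ).trace = 0 := by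
  have hC : (Uᴴ * ((1 : Matrix (Fin n) (Fin n) ℂ) ⊗ₖ matFun f M) * U).IsHermitian := by
    unfold Matrix.IsHermitian
    rw [Matrix.conjTranspose_mul, Matrix.conjTranspose_mul, Matrix.conjTranspose_kronecker,
      matFun_herm, Matrix.conjTranspose_one, Matrix.conjTranspose_conjTranspose, Matrix.mul_assoc]
  have hD : (A ⊗ₖ (1 : Matrix (Fin m) (Fin m) ℂ)).IsHermitian := by
    unfold Matrix.IsHermitian
    rw [Matrix.conjTranspose_kronecker, hA.eq, Matrix.conjTranspose_one]
  have hτ : (ρ ⊗ₖ rankOneProj ξ).PosSemidef :=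
    hρ.kronecker (Matrix.posSemidef_vecMulVec_self_star ξ)
  have htr : (ρ ⊗ₖ rankOneProj ξ).trace = 1 := by
    rw [Matrix.trace_kronecker, hρtr, rankOneProj, Matrix.trace_vecMulVec, dotProduct_comm, hξ, one_mul]
  rw [QIC_iff _ _ _ hC hD hτ htr]
  have key : ∀ x a : ℝ, (specProj (Uᴴ * ((1 : Matrix (Fin n) (Fin n) ℂ) ⊗ₖ matFun f M) * U) x *
      specProj (A ⊗ₖ (1 : Matrix (Fin m) (Fin m) ℂ)) a * (ρ ⊗ₖ rankOneProj ξ)).trace =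
      ((∑ y ∈ (eigFinset M).filter (fun y => f y = x), povmOf U M ξ y) *
          specProj A a * ρ).trace := by
    intro x a
    rw [specProj_meter U hU hU' M hM f hC, specProj_kron A hA hD]
    simp only [Finset.sum_mul, Matrix.trace_sum]
    exact Finset.sum_congr rfl fun y _ => trace_povm ξ U M _ ρ y
  simp only [key]
  constructor
  · intro h Δ Γ hd
    have e : ∑ y ∈ (eigFinset M).filter (fun y => f y ∈ Δ), povmOf U M ξ y
        = ∑ x ∈ Δ, ∑ y ∈ (eigFinset M).filter (fun y => f y = x), povmOf U M ξ y := by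
      simp only [Finset.sum_filter]
      rw [Finset.sum_comm]
      refine Finset.sum_congr rfl fun y _ => ?_
      rw [Finset.sum_ite_eq]
    rw [e, Finset.mul_sum, Finset.sum_mul, Matrix.trace_sum]
    refine Finset.sum_eq_zero fun a ha => ?_
    rw [Finset.sum_mul, Finset.sum_mul, Matrix.trace_sum]
    refine Finset.sum_eq_zero fun x hx => ?_
    refine h x a ?_
    rintro rfl
    exact Finset.disjoint_left.1 hd hx ha
  · intro h x a hxa
    have := h {x} {a} (by simpa using hxa)
    simpa only [Finset.mem_singleton, Finset.sum_singleton] using this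

/-- Characterization of simultaneous measurement by the POVM: the measuring
process `(ℂᵐ, ξ, U, M)` simultaneously measures `A` and `B` with `f` and `g`
in the state `ρ` iff the POVM satisfies the stated vanishing conditions for all
pairs of disjoint finite subsets of `ℝ`. -/
theorem simultaneous_measurement_iff_povm {n m : ℕ} (hn : 0 < n) (hm : 0 < m)
    (ξ : Fin m → ℂ) (hξ : star ξ ⬝ᵥ ξ = 1)
    (U : Matrix (Fin n × Fin m) (Fin n × Fin m) ℂ)
    (hU : U * Uᴴ = 1) (hU' : Uᴴ * U = 1)
    (M : Matrix (Fin m) (Fin m) ℂ) (hM : M.IsHermitian)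
    (A B : Matrix (Fin n) (Fin n) ℂ) (hA : A.IsHermitian) (hB : B.IsHermitian)
    (f g : ℝ → ℝ)
    (ρ : Matrix (Fin n) (Fin n) ℂ) (hρ : ρ.PosSemidef) (hρtr : ρ.trace = 1) :
    (QIC (Uᴴ * ((1 : Matrix (Fin n) (Fin n) ℂ) ⊗ₖ matFun f M) * U)
        (A ⊗ₖ (1 : Matrix (Fin m) (Fin m) ℂ)) (ρ ⊗ₖ rankOneProj ξ) ∧
      QIC (Uᴴ * ((1 : Matrix (Fin n) (Fin n) ℂ) ⊗ₖ matFun g M) * U)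
        (B ⊗ₖ (1 : Matrix (Fin m) (Fin m) ℂ)) (ρ ⊗ₖ rankOneProj ξ))
    ↔
    ∀ Δ Γ : Finset ℝ, Disjoint Δ Γ →
      ((∑ y ∈ (eigFinset M).filter (fun y => f y ∈ Δ), povmOf U M ξ y) *
          (∑ a ∈ Γ, specProj A a) * ρ).trace = 0 ∧
      ((∑ y ∈ (eigFinset M).filter (fun y => g y ∈ Δ), povmOf U M ξ y) *
          (∑ b ∈ Γ, specProj B b) * ρ).trace = 0 := by
  rw [QIC_iff_povm ξ hξ U hU hU' M hM A hA f ρ hρ hρtr,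
    QIC_iff_povm ξ hξ U hU hU' M hM B hB g ρ hρ hρtr]
  constructor
  · rintro ⟨h1, h2⟩ Δ Γ hd
    exact ⟨h1 Δ Γ hd, h2 Δ Γ hd⟩
  · intro h
    exact ⟨fun Δ Γ hd => (h Δ Γ hd).1, fun Δ Γ hd => (h Δ Γ hd).2⟩
end
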